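/- Refinement monotonicity of synergy. Let A be a finite index set, let (X_a)_{a∈A} be finite-valued random variables that are mutually independent, and let Y be a finite-valued random variable on the same probability space. If P and P' are partitions of A and P' refines P (every block of P' is contained in a block of P), then Syn_P(X_A → Y) ≤ Syn_{P'}(X_A → Y), where for a partition Q = {N₁,…,N_r} of A, Syn_Q(X_A → Y) := I(X_A; Y) − Σ_{j=1}^r I(X_{N_j}; Y). -/

import Mathlib

open MeasureTheory Finset

/-- Probability that the random variable `X` takes the value `s` under `μ`. -/
noncomputable def pr {Ω : Type*} [MeasurableSpace Ω] (μ : Measure Ω)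
    {S : Type*} (X : Ω → S) (s : S) : ℝ :=
  (μ {ω | X ω = s}).toReal

/-- Shannon entropy (natural log) of a finite-valued random variable. -/
noncomputable def finEntropy {Ω : Type*} [MeasurableSpace Ω] (μ : Measure Ω)
    {S : Type*} [Fintype S] (X : Ω → S) : ℝ :=
  -∑ s : S, pr μ X s * Real.log (pr μ X s)

/-- Mutual information `I(X;Y) = H(X) + H(Y) - H((X,Y))`. -/
noncomputable def mutInfo {Ω : Type*} [MeasurableSpace Ω] (μ : Measure Ω)
    {S T : Type*} [Fintype S] [Fintype T] (X : Ω → S) (Y : Ω → T) : ℝ :=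
  finEntropy μ X + finEntropy μ Y - finEntropy μ (fun ω => (X ω, Y ω))


/-- `P` is a partition of the finite index set `A`: its blocks are nonempty subsets of `A`,
pairwise disjoint, and they cover `A`. -/
def IsFinsetPartition {ι : Type*} (A : Finset ι) (P : Finset (Finset ι)) : Prop :=
  (∀ B ∈ P, B.Nonempty) ∧ (∀ B ∈ P, B ⊆ A) ∧
    (∀ B ∈ P, ∀ C ∈ P, B ≠ C → Disjoint B C) ∧ (∀ a ∈ A, ∃ B ∈ P, a ∈ B)

/-- The tuple `X_B = (X_a)_{a ∈ B}` of a family of random variables over a finite index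
subset `B`, viewed as a single random variable valued in the product type. -/
def tupleOn {Ω : Type*} {ι : Type*} {S : ι → Type*} (X : ∀ a, Ω → S a) (B : Finset ι) :
    Ω → ∀ a : B, S a :=
  fun ω a => X a ω

/-- The synergy of `X_A` with respect to `Y` relative to a partition `Q = {N₁,…,N_r}` of `A`:
`Syn_Q(X_A → Y) := I(X_A;Y) − Σ_j I(X_{N_j};Y)`. -/
noncomputable def synPart {Ω : Type*} [MeasurableSpace Ω] (μ : Measure Ω)
    {ι : Type*} [DecidableEq ι] {S : ι → Type*} [∀ a, Fintype (S a)]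
    {T : Type*} [Fintype T]
    (X : ∀ a, Ω → S a) (A : Finset ι) (Q : Finset (Finset ι)) (Y : Ω → T) : ℝ :=
  mutInfo μ (tupleOn X A) Y - ∑ B ∈ Q, mutInfo μ (tupleOn X B) Y

open ProbabilityTheory

section Entropy

variable {Ω : Type*} [MeasurableSpace Ω] {μ : Measure Ω} {S T U : Type*}

theorem pr_nonneg (X : Ω → S) (s : S) : 0 ≤ pr μ X s := ENNReal.toReal_nonneg

theorem pr_comp_of_injective (X : Ω → S) {g : S → T} (hg : g.Injective) (s : S) :
    pr μ (fun ω => g (X ω)) (g s) = pr μ X s := by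
  simp only [pr, hg.eq_iff]

/-- Entropy is invariant under injective relabelling of the values. -/
theorem finEntropy_comp_of_injective [Fintype S] [Fintype T] (X : Ω → S) {g : S → T}
    (hg : g.Injective) : finEntropy μ (fun ω => g (X ω)) = finEntropy μ X := by
  classical
  unfold finEntropy
  rw [← Finset.sum_subset (Finset.subset_univ (univ.image g)), Finset.sum_image hg.injOn]
  · simp only [pr_comp_of_injective X hg]
  · intro t _ ht
    have h : {ω | g (X ω) = t} = ∅ := by
      ext ω
      simp only [Set.mem_ofPred_eq, Set.mem_empty_iff_false, iff_false]
      rintro rfl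
      exact ht (mem_image_of_mem g (mem_univ _))
    simp [pr, h]

theorem sum_pr_pair [IsFiniteMeasure μ] [Fintype T] {X : Ω → S} {Y : Ω → T}
    (hX : ∀ s, MeasurableSet {ω | X ω = s}) (hY : ∀ t, MeasurableSet {ω | Y ω = t}) (s : S) :
    ∑ t, pr μ (fun ω => (X ω, Y ω)) (s, t) = pr μ X s := by
  have h : {ω | X ω = s} = ⋃ t ∈ (univ : Finset T), {ω | (X ω, Y ω) = (s, t)} := by
    ext ω; simp
  unfold pr
  rw [h]
  refine (measureReal_biUnion_finset ?_ ?_).symm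
  · intro t _ t' _ htt'
    refine Set.disjoint_left.2 fun ω h h' => htt' ?_
    exact (Prod.ext_iff.1 h).2.symm.trans (Prod.ext_iff.1 h').2
  · intro t _
    simp only [Prod.mk.injEq]
    exact (hX s).inter (hY t)

theorem sum_pr [IsProbabilityMeasure μ] [Fintype S] {X : Ω → S}
    (hX : ∀ s, MeasurableSet {ω | X ω = s}) : ∑ s, pr μ X s = 1 := by
  have h := sum_pr_pair (μ := μ) (X := fun _ => ()) (Y := X) (by simp) hX ()
  have h' := fun s => pr_comp_of_injective (μ := μ) X (Prod.mk_right_injective ()) s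
  simp only [h'] at h
  simpa [pr] using h

theorem finEntropy_pair_eq_add [IsProbabilityMeasure μ] [Fintype S] [Fintype T]
    {X : Ω → S} {Y : Ω → T}
    (hX : ∀ s, MeasurableSet {ω | X ω = s}) (hY : ∀ t, MeasurableSet {ω | Y ω = t})
    (h : ∀ s t, pr μ (fun ω => (X ω, Y ω)) (s, t) = pr μ X s * pr μ Y t) :
    finEntropy μ (fun ω => (X ω, Y ω)) = finEntropy μ X + finEntropy μ Y := by
  have key (s : S) (t : T) : pr μ X s * pr μ Y t * Real.log (pr μ X s * pr μ Y t) =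
      pr μ X s * Real.log (pr μ X s) * pr μ Y t +
        pr μ X s * (pr μ Y t * Real.log (pr μ Y t)) := by
    by_cases hs : pr μ X s = 0
    · simp [hs]
    by_cases ht : pr μ Y t = 0
    · simp [ht]
    rw [Real.log_mul hs ht]; ring
  simp only [finEntropy, Fintype.sum_prod_type, h, key, sum_add_distrib, ← mul_sum, ← sum_mul,
    sum_pr hX, sum_pr hY]
  ring

/-- Conditional mutual information is nonnegative, for a nonnegative function on a product. -/
theorem sum_mul_log_submodular [Fintype S] [Fintype T] [Fintype U] (p : S → T → U → ℝ)
    (hp : ∀ s t u, 0 ≤ p s t u) :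
    ∑ s, ∑ u, (∑ t, p s t u) * Real.log (∑ t, p s t u) +
        ∑ t, ∑ u, (∑ s, p s t u) * Real.log (∑ s, p s t u) ≤
      ∑ s, ∑ t, ∑ u, p s t u * Real.log (p s t u) +
        ∑ u, (∑ s, ∑ t, p s t u) * Real.log (∑ s, ∑ t, p s t u) := by
  set a : S → U → ℝ := fun s u => ∑ t, p s t u with ha
  set b : T → U → ℝ := fun t u => ∑ s, p s t u with hb
  set c : U → ℝ := fun u => ∑ s, ∑ t, p s t u with hc
  have ha0 s u : 0 ≤ a s u := sum_nonneg fun t _ => hp s t u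
  have hb0 t u : 0 ≤ b t u := sum_nonneg fun s _ => hp s t u
  have hc0 u : 0 ≤ c u := sum_nonneg fun s _ => ha0 s u
  have hpa s t u : p s t u ≤ a s u := single_le_sum (fun t _ => hp s t u) (mem_univ t)
  have hpb s t u : p s t u ≤ b t u := single_le_sum (fun s _ => hp s t u) (mem_univ s)
  have hac s u : a s u ≤ c u := single_le_sum (fun s _ => ha0 s u) (mem_univ s)
  have hbc u : ∑ t, b t u = c u := sum_comm
  have term s t u : p s t u - a s u * b t u / c u ≤
      p s t u * Real.log (p s t u) + p s t u * Real.log (c u) -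
        p s t u * Real.log (a s u) - p s t u * Real.log (b t u) := by
    rcases (hp s t u).eq_or_lt with h | h
    · simp only [← h, zero_mul, zero_sub, add_zero, sub_zero, Left.neg_nonpos_iff]
      exact div_nonneg (mul_nonneg (ha0 s u) (hb0 t u)) (hc0 u)
    · have h1 := h.trans_le (hpa s t u)
      have h2 := h.trans_le (hpb s t u)
      have h3 := h1.trans_le (hac s u)
      have h4 := Real.one_sub_inv_le_log_of_pos (x := p s t u * c u / (a s u * b t u))
        (by positivity)
      rw [Real.log_div (by positivity) (by positivity), Real.log_mul h.ne' h3.ne',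
        Real.log_mul h1.ne' h2.ne'] at h4
      have h5 := mul_le_mul_of_nonneg_left h4 h.le
      have h6 : p s t u * (1 - (p s t u * c u / (a s u * b t u))⁻¹) =
          p s t u - a s u * b t u / c u := by
        field_simp
      linarith
  have total := sum_le_sum fun s (_ : s ∈ univ) => sum_le_sum fun t (_ : t ∈ univ) =>
    sum_le_sum fun u (_ : u ∈ univ) => term s t u
  simp only [sum_add_distrib, sum_sub_distrib] at total
  have e0 : ∑ s, ∑ t, ∑ u, p s t u = ∑ u, c u := by
    simp only [hc]
    rw [sum_comm (s := (univ : Finset U))]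
    exact sum_congr rfl fun s _ => sum_comm
  have e1 : ∑ s, ∑ t, ∑ u, a s u * b t u / c u = ∑ u, c u := by
    have : ∀ u, ∑ s, ∑ t, a s u * b t u / c u = c u := fun u => by
      simp only [← sum_div, ← mul_sum, hbc, ← sum_mul]
      exact mul_self_div_self (c u)
    rw [← sum_congr rfl fun u _ => this u, sum_comm (s := (univ : Finset U))]
    exact sum_congr rfl fun s _ => sum_comm
  have e2 : ∑ s, ∑ t, ∑ u, p s t u * Real.log (c u) = ∑ u, c u * Real.log (c u) := by
    simp only [hc, sum_mul]
    rw [sum_comm (s := (univ : Finset U))]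
    exact sum_congr rfl fun s _ => sum_comm
  have e3 : ∑ s, ∑ t, ∑ u, p s t u * Real.log (a s u) =
      ∑ s, ∑ u, a s u * Real.log (a s u) := by
    refine sum_congr rfl fun s _ => ?_
    rw [sum_comm]
    exact sum_congr rfl fun u _ => (sum_mul ..).symm
  have e4 : ∑ s, ∑ t, ∑ u, p s t u * Real.log (b t u) =
      ∑ t, ∑ u, b t u * Real.log (b t u) := by
    rw [sum_comm]
    refine sum_congr rfl fun t _ => ?_
    rw [sum_comm]
    exact sum_congr rfl fun u _ => (sum_mul ..).symm
  linarith

theorem finEntropy_submodular [IsFiniteMeasure μ] [Fintype S] [Fintype T] [Fintype U]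
    {X : Ω → S} {Y : Ω → T} {Z : Ω → U}
    (hX : ∀ s, MeasurableSet {ω | X ω = s}) (hY : ∀ t, MeasurableSet {ω | Y ω = t})
    (hZ : ∀ u, MeasurableSet {ω | Z ω = u}) :
    finEntropy μ (fun ω => ((X ω, Y ω), Z ω)) + finEntropy μ Z ≤
      finEntropy μ (fun ω => (X ω, Z ω)) + finEntropy μ (fun ω => (Y ω, Z ω)) := by
  have hXZ (q : S × U) : MeasurableSet {ω | (X ω, Z ω) = q} := by
    simp only [Prod.ext_iff]
    exact (hX q.1).inter (hZ q.2)
  have hYZ (q : T × U) : MeasurableSet {ω | (Y ω, Z ω) = q} := by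
    simp only [Prod.ext_iff]
    exact (hY q.1).inter (hZ q.2)
  have mX s u : ∑ t, pr μ (fun ω => ((X ω, Y ω), Z ω)) ((s, t), u) =
      pr μ (fun ω => (X ω, Z ω)) (s, u) := by
    rw [← sum_pr_pair hXZ hY]
    refine sum_congr rfl fun t _ => ?_
    simp only [pr, Prod.mk.injEq, and_right_comm]
  have mY t u : ∑ s, pr μ (fun ω => ((X ω, Y ω), Z ω)) ((s, t), u) =
      pr μ (fun ω => (Y ω, Z ω)) (t, u) := by
    rw [← sum_pr_pair hYZ hX]
    refine sum_congr rfl fun s _ => ?_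
    simp only [pr, Prod.mk.injEq, and_assoc, and_comm]
  have mZ u : ∑ s, pr μ (fun ω => (X ω, Z ω)) (s, u) = pr μ Z u := by
    rw [← sum_pr_pair hZ hX]
    refine sum_congr rfl fun s _ => ?_
    simp only [pr, Prod.mk.injEq, and_comm]
  have key := sum_mul_log_submodular
    (fun s t u => pr μ (fun ω => ((X ω, Y ω), Z ω)) ((s, t), u)) fun _ _ _ => pr_nonneg _ _
  simp only [mX, mY, mZ] at key
  simp only [finEntropy, Fintype.sum_prod_type]
  linarith

/-- Mutual information with a fixed target is superadditive over independent sources. -/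
theorem mutInfo_add_le_of_pr_mul [IsProbabilityMeasure μ] [Fintype S] [Fintype T] [Fintype U]
    {X : Ω → S} {Y : Ω → T} {Z : Ω → U}
    (hX : ∀ s, MeasurableSet {ω | X ω = s}) (hY : ∀ t, MeasurableSet {ω | Y ω = t})
    (hZ : ∀ u, MeasurableSet {ω | Z ω = u})
    (h : ∀ s t, pr μ (fun ω => (X ω, Y ω)) (s, t) = pr μ X s * pr μ Y t) :
    mutInfo μ X Z + mutInfo μ Y Z ≤ mutInfo μ (fun ω => (X ω, Y ω)) Z := by
  have h1 := finEntropy_pair_eq_add hX hY h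
  have h2 := finEntropy_submodular (μ := μ) hX hY hZ
  unfold mutInfo
  linarith

/-- Mutual information is invariant under injective relabelling of the source. -/
theorem mutInfo_comp_of_injective [Fintype S] [Fintype T] [Fintype U] (X : Ω → S) (Y : Ω → U)
    {g : S → T} (hg : g.Injective) : mutInfo μ (fun ω => g (X ω)) Y = mutInfo μ X Y := by
  unfold mutInfo
  rw [finEntropy_comp_of_injective X hg,
    ← finEntropy_comp_of_injective (fun ω => (X ω, Y ω)) (hg.prodMap Function.injective_id)]
  rfl

theorem mutInfo_const [IsProbabilityMeasure μ] [Fintype S] [Unique S] [Fintype T]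
    (X : Ω → S) (Y : Ω → T) : mutInfo μ X Y = 0 := by
  obtain rfl : X = fun _ => default := Subsingleton.elim _ _
  unfold mutInfo
  rw [finEntropy_comp_of_injective Y (Prod.mk_right_injective (default : S))]
  simp [finEntropy, pr]

end Entropy

section Tuples

theorem measurable_tupleOn {Ω ι : Type*} [MeasurableSpace Ω] {S : ι → Type*}
    [∀ a, MeasurableSpace (S a)] {X : ∀ a, Ω → S a} (hX : ∀ a, Measurable (X a))
    (B : Finset ι) : Measurable (tupleOn X B) :=
  measurable_pi_lambda _ fun a => hX a

variable {Ω : Type*} [MeasurableSpace Ω] {μ : Measure Ω} [IsProbabilityMeasure μ]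
  {ι : Type*} {S : ι → Type*} [∀ a, Fintype (S a)]
  [∀ a, MeasurableSpace (S a)] [∀ a, MeasurableSingletonClass (S a)]
  {T : Type*} [Fintype T] {X : ∀ a, Ω → S a} {Y : Ω → T}

theorem iIndepFun_of_pr_eq_prod [Fintype ι] (hX : ∀ a, Measurable (X a))
    (hindep : ∀ f : ∀ a, S a,
      pr μ (fun ω a => X a ω) f = ∏ a, pr μ (X a) (f a)) : iIndepFun X μ := by
  classical
  rw [iIndepFun_iff_map_fun_eq_pi_map fun a => (hX a).aemeasurable]
  have (a : ι) : IsProbabilityMeasure (μ.map (X a)) :=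
    Measure.isProbabilityMeasure_map (hX a).aemeasurable
  refine Measure.ext_of_singleton fun f => ?_
  rw [Measure.pi_singleton,
    Measure.map_apply (measurable_pi_lambda _ hX) (measurableSet_singleton f)]
  simp only [Measure.map_apply (hX _) (measurableSet_singleton _)]
  have h := hindep f
  simp only [pr, ← ENNReal.toReal_prod] at h
  refine (ENNReal.toReal_eq_toReal_iff' (measure_ne_top _ _) ?_).1 h
  exact ENNReal.prod_ne_top fun a _ => measure_ne_top _ _

theorem mutInfo_tupleOn_union [DecidableEq ι] (hX : ∀ a, Measurable (X a))
    (hY : ∀ t, MeasurableSet {ω | Y ω = t})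
    (hindep : iIndepFun X μ) {B C : Finset ι} (hBC : Disjoint B C) :
    mutInfo μ (tupleOn X B) Y + mutInfo μ (tupleOn X C) Y ≤
      mutInfo μ (tupleOn X (B ∪ C)) Y := by
  have hfib (D : Finset ι) (d : ∀ a : D, S a) : MeasurableSet {ω | tupleOn X D ω = d} :=
    measurable_tupleOn hX D (measurableSet_singleton d)
  let g : (∀ a : (B ∪ C : Finset ι), S a) → (∀ a : B, S a) × (∀ a : C, S a) := fun f =>
    (fun a => f ⟨a, mem_union_left C a.2⟩, fun a => f ⟨a, mem_union_right B a.2⟩)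
  have hg : g.Injective := by
    intro f f' h
    ext ⟨a, ha⟩
    rcases mem_union.1 ha with h' | h'
    · exact congrFun (congrArg Prod.fst h) ⟨a, h'⟩
    · exact congrFun (congrArg Prod.snd h) ⟨a, h'⟩
  rw [← mutInfo_comp_of_injective (tupleOn X (B ∪ C)) Y hg]
  refine mutInfo_add_le_of_pr_mul (hfib B) (hfib C) hY fun b c => ?_
  have h := (hindep.indepFun_finset B C hBC hX).measure_inter_preimage_eq_mul {b} {c}
    (measurableSet_singleton b) (measurableSet_singleton c)
  simp only [pr, ← ENNReal.toReal_mul, Prod.mk.injEq]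
  exact congrArg ENNReal.toReal h

theorem sum_mutInfo_tupleOn_le [DecidableEq ι] (hX : ∀ a, Measurable (X a))
    (hY : ∀ t, MeasurableSet {ω | Y ω = t}) (hindep : iIndepFun X μ)
    (Q : Finset (Finset ι)) (hQ : ∀ B ∈ Q, ∀ C ∈ Q, B ≠ C → Disjoint B C) :
    ∑ B ∈ Q, mutInfo μ (tupleOn X B) Y ≤ mutInfo μ (tupleOn X (Q.biUnion id)) Y := by
  induction Q using Finset.induction_on with
  | empty =>
    have : IsEmpty ((∅ : Finset (Finset ι)).biUnion id) := by
      rw [biUnion_empty]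
      exact isEmpty_coe_sort.2 rfl
    rw [sum_empty, mutInfo_const]
  | insert B Q hB ih =>
    rw [sum_insert hB, biUnion_insert]
    have hdisj : Disjoint (id B) (Q.biUnion id) := by
      refine (disjoint_biUnion_right _ _ _).2 fun C hC => ?_
      exact hQ B (mem_insert_self B Q) C (mem_insert_of_mem hC) fun h => hB (h ▸ hC)
    have h := ih fun C hC D hD => hQ C (mem_insert_of_mem hC) D (mem_insert_of_mem hD)
    exact (add_le_add_right h _).trans (mutInfo_tupleOn_union hX hY hindep hdisj)

end Tuples

theorem IsFinsetPartition.biUnion_filter_subset {ι : Type*} [DecidableEq ι] {A : Finset ι}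
    {P P' : Finset (Finset ι)} (hP : IsFinsetPartition A P) (hP' : IsFinsetPartition A P')
    (hrefine : ∀ B ∈ P', ∃ C ∈ P, B ⊆ C) {C : Finset ι} (hC : C ∈ P) :
    (P'.filter (· ⊆ C)).biUnion id = C := by
  ext a
  simp only [mem_biUnion, mem_filter, id]
  constructor
  · rintro ⟨B, ⟨-, hBC⟩, ha⟩
    exact hBC ha
  · intro ha
    obtain ⟨B, hB, haB⟩ := hP'.2.2.2 a (hP.2.1 C hC ha)
    obtain ⟨D, hD, hBD⟩ := hrefine B hB
    obtain rfl : D = C := by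
      by_contra hne
      exact disjoint_left.1 (hP.2.2.1 D hD C hC hne) (hBD haB) ha
    exact ⟨B, ⟨hB, hBD⟩, haB⟩

theorem IsFinsetPartition.sum_filter_subset {ι : Type*} [DecidableEq ι] {A : Finset ι}
    {P P' : Finset (Finset ι)} (hP : IsFinsetPartition A P) (hP' : IsFinsetPartition A P')
    (hrefine : ∀ B ∈ P', ∃ C ∈ P, B ⊆ C) (F : Finset ι → ℝ) :
    ∑ C ∈ P, ∑ B ∈ P' with B ⊆ C, F B = ∑ B ∈ P', F B := by
  simp only [sum_filter]
  rw [sum_comm]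
  refine sum_congr rfl fun B hB => ?_
  obtain ⟨C, hC, hBC⟩ := hrefine B hB
  rw [sum_eq_single_of_mem C hC, if_pos hBC]
  intro D hD hDC
  refine if_neg fun hBD => ?_
  obtain ⟨a, ha⟩ := hP'.1 B hB
  exact disjoint_left.1 (hP.2.2.1 D hD C hC hDC) (hBD ha) (hBC ha)

/-- Refinement monotonicity of synergy.
For mutually independent finite-valued sources `(X_a)_{a ∈ A}` and a finite-valued target
`Y`, if the partition `P'` of `A` refines the partition `P` (every block of `P'` is
contained in a block of `P`), then `Syn_P(X_A → Y) ≤ Syn_{P'}(X_A → Y)`. -/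
theorem synergy_monotone_under_refinement
    {Ω : Type*} [MeasurableSpace Ω] (μ : Measure Ω) [IsProbabilityMeasure μ]
    {ι : Type*} [Fintype ι] [DecidableEq ι]
    {S : ι → Type*} [∀ a, Fintype (S a)]
    [∀ a, MeasurableSpace (S a)] [∀ a, MeasurableSingletonClass (S a)]
    {T : Type*} [Fintype T] [MeasurableSpace T] [MeasurableSingletonClass T]
    (X : ∀ a, Ω → S a) (Y : Ω → T)
    (hX : ∀ a, Measurable (X a)) (hY : Measurable Y)
    (hindep : ∀ f : ∀ a, S a,
      pr μ (fun ω a => X a ω) f = ∏ a, pr μ (X a) (f a))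
    (P P' : Finset (Finset ι))
    (hP : IsFinsetPartition Finset.univ P) (hP' : IsFinsetPartition Finset.univ P')
    (hrefine : ∀ B ∈ P', ∃ C ∈ P, B ⊆ C) :
    synPart μ X Finset.univ P Y ≤ synPart μ X Finset.univ P' Y := by
  have hind := iIndepFun_of_pr_eq_prod hX hindep
  have hYfib (t : T) : MeasurableSet {ω | Y ω = t} := hY (measurableSet_singleton t)
  refine sub_le_sub_left ?_ _
  rw [← hP.sum_filter_subset hP' hrefine]
  refine sum_le_sum fun C hC => ?_
  have h := sum_mutInfo_tupleOn_le hX hYfib hind (P'.filter (· ⊆ C)) fun B hB D hD =>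
    hP'.2.2.1 B (mem_filter.1 hB).1 D (mem_filter.1 hD).1
  rwa [hP.biUnion_filter_subset hP' hrefine hC] at h
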